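/- Let m, c > 0. For λ ∈ (−mc², mc²) set s(λ) := √((mc)² − λ²/c²) ≥ 0 and define t₃^λ(x) := ( i(α·x)/(c|x|²) + m(I₄ + β) ) · (1 − e^{-s(λ)|x|})/(4π|x|) for x ∈ ℝ³∖{0}. Then there exists a constant κ > 0, depending only on m and c, such that |t₃^λ(x)| ≤ κ·s(λ)·(1 + |x|^{-1}) for all λ ∈ (−mc², mc²) and all x ∈ ℝ³∖{0}. -/

import Mathlib

noncomputable section

open MeasureTheory Complex Matrix
open scoped ENNReal

/-- The action of a complex `n × n` matrix on Euclidean space `ℂⁿ`. -/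
def opApply {n : ℕ} (A : Matrix (Fin n) (Fin n) ℂ) :
    EuclideanSpace ℂ (Fin n) →L[ℂ] EuclideanSpace ℂ (Fin n) :=
  Matrix.toEuclideanCLM (𝕜 := ℂ) A

/-- The ℓ²-operator norm of a complex matrix, `|A|` in the paper. -/
def matNorm {n : ℕ} (A : Matrix (Fin n) (Fin n) ℂ) : ℝ := ‖opApply A‖

/-- Euclidean space `ℝ³`. -/
abbrev E3 := EuclideanSpace ℝ (Fin 3)

/-- `4 × 4` complex matrices. -/
abbrev M4 := Matrix (Fin 4) (Fin 4) ℂ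

/-- The Dirac matrix `α₁ = [[0, σ₁], [σ₁, 0]]`. -/
def alpha1 : M4 := !![0,0,0,1; 0,0,1,0; 0,1,0,0; 1,0,0,0]

/-- The Dirac matrix `α₂ = [[0, σ₂], [σ₂, 0]]`. -/
def alpha2 : M4 := !![0,0,0,-I; 0,0,I,0; 0,-I,0,0; I,0,0,0]

/-- The Dirac matrix `α₃ = [[0, σ₃], [σ₃, 0]]`. -/
def alpha3 : M4 := !![0,0,1,0; 0,0,0,-1; 1,0,0,0; 0,-1,0,0]

/-- The Dirac matrix `β = [[I₂, 0], [0, -I₂]]`. -/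
def betaM : M4 := !![1,0,0,0; 0,1,0,0; 0,0,-1,0; 0,0,0,-1]

/-- `α · x = x₁α₁ + x₂α₂ + x₃α₃`. -/
def alphaDot (x : E3) : M4 :=
  (x 0 : ℂ) • alpha1 + (x 1 : ℂ) • alpha2 + (x 2 : ℂ) • alpha3

/-- The kernel `t₃^λ(x) = ( i(α·x)/(c|x|²) + m(I₄ + β) ) (1 - e^{-s(λ)|x|})/(4π|x|)`
with `s(λ) = √((mc)² - λ²/c²)`. -/
def t3ker (m c lam : ℝ) (x : E3) : M4 :=
  (((1 - Real.exp (-(Real.sqrt ((m * c) ^ 2 - lam ^ 2 / c ^ 2) * ‖x‖))) /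
      (4 * Real.pi * ‖x‖) : ℝ) : ℂ) •
    ((I / ((c : ℂ) * (‖x‖ : ℂ) ^ 2)) • alphaDot x + (m : ℂ) • ((1 : M4) + betaM))

/-!
By the Clifford relations `α · x` and `β` are self-adjoint with squares `|x|²` and `1`, so the
C⋆-identity gives `|α · x| = |x|` and `|β| = 1`. The matrix factor of `t₃^λ(x)` is therefore at most
`1/(c|x|) + 2m`, while `1 - e^{-t} ≤ t` bounds the scalar factor by `s(λ)/(4π)`: this is where the
factor `s(λ)` comes from, and it also cancels the singularity `1/|x|` of the scalar factor.
-/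

theorem norm_sq_eq_norm_of_mul_self_eq_smul_one {𝕜 A : Type*} [NormedField 𝕜] [NormedRing A]
    [StarRing A] [CStarRing A] [Nontrivial A] [NormedSpace 𝕜 A] {a : A} {z : 𝕜}
    (ha : IsSelfAdjoint a) (h : a * a = z • 1) : ‖a‖ ^ 2 = ‖z‖ := by
  rw [← ha.norm_mul_self, h, norm_smul, CStarRing.norm_one, mul_one]

theorem abs_one_sub_exp_neg_le {t : ℝ} (ht : 0 ≤ t) : |1 - Real.exp (-t)| ≤ t := by
  rw [abs_of_nonneg (sub_nonneg.2 (Real.exp_le_one_iff.2 (neg_nonpos.2 ht)))]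
  linarith [Real.one_sub_le_exp_neg t]

theorem abs_one_sub_exp_neg_mul_div_mul_le {k r s : ℝ} (hk : 0 < k) (hr : 0 < r) (hs : 0 ≤ s) :
    |(1 - Real.exp (-(s * r))) / (k * r)| ≤ s / k := by
  calc |(1 - Real.exp (-(s * r))) / (k * r)|
      = |1 - Real.exp (-(s * r))| / (k * r) := by rw [abs_div, abs_of_pos (mul_pos hk hr)]
    _ ≤ s * r / (k * r) := by
        gcongr
        exact abs_one_sub_exp_neg_le (mul_nonneg hs hr.le)
    _ = s / k := mul_div_mul_right _ _ hr.ne'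

theorem isSelfAdjoint_alpha1 : IsSelfAdjoint alpha1 := by
  ext i j; fin_cases i <;> fin_cases j <;> simp [alpha1, star_apply]

theorem isSelfAdjoint_alpha2 : IsSelfAdjoint alpha2 := by
  ext i j; fin_cases i <;> fin_cases j <;> simp [alpha2, star_apply]

theorem isSelfAdjoint_alpha3 : IsSelfAdjoint alpha3 := by
  ext i j; fin_cases i <;> fin_cases j <;> simp [alpha3, star_apply]

theorem isSelfAdjoint_betaM : IsSelfAdjoint betaM := by
  ext i j; fin_cases i <;> fin_cases j <;> simp [betaM, star_apply]

theorem alpha1_mul_self : alpha1 * alpha1 = 1 := by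
  ext i j; fin_cases i <;> fin_cases j <;> simp [alpha1]

theorem alpha2_mul_self : alpha2 * alpha2 = 1 := by
  ext i j; fin_cases i <;> fin_cases j <;> simp [alpha2]

theorem alpha3_mul_self : alpha3 * alpha3 = 1 := by
  ext i j; fin_cases i <;> fin_cases j <;> simp [alpha3]

theorem betaM_mul_self : betaM * betaM = 1 := by
  ext i j; fin_cases i <;> fin_cases j <;> simp [betaM]

theorem alpha2_mul_alpha1 : alpha2 * alpha1 = -(alpha1 * alpha2) := by
  ext i j; fin_cases i <;> fin_cases j <;> simp [alpha1, alpha2]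

theorem alpha3_mul_alpha1 : alpha3 * alpha1 = -(alpha1 * alpha3) := by
  ext i j; fin_cases i <;> fin_cases j <;> simp [alpha1, alpha3]

theorem alpha3_mul_alpha2 : alpha3 * alpha2 = -(alpha2 * alpha3) := by
  ext i j; fin_cases i <;> fin_cases j <;> simp [alpha2, alpha3]

theorem isSelfAdjoint_alphaDot (x : E3) : IsSelfAdjoint (alphaDot x) := by
  have isSelfAdjoint_smul (t : ℝ) {A : M4} (hA : IsSelfAdjoint A) : IsSelfAdjoint ((t : ℂ) • A) :=
    .smul (Complex.conj_ofReal t) hA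
  exact ((isSelfAdjoint_smul (x 0) isSelfAdjoint_alpha1).add
    (isSelfAdjoint_smul (x 1) isSelfAdjoint_alpha2)).add
    (isSelfAdjoint_smul (x 2) isSelfAdjoint_alpha3)

theorem alphaDot_mul_self (x : E3) : alphaDot x * alphaDot x = (‖x‖ : ℂ) ^ 2 • 1 := by
  have hx : (‖x‖ : ℂ) ^ 2 = (x 0 : ℂ) ^ 2 + (x 1 : ℂ) ^ 2 + (x 2 : ℂ) ^ 2 := by
    exact_mod_cast (EuclideanSpace.real_norm_sq_eq x).trans (Fin.sum_univ_three _)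
  rw [hx]
  simp only [alphaDot, add_mul, mul_add, smul_mul_smul_comm, alpha1_mul_self, alpha2_mul_self,
    alpha3_mul_self, alpha2_mul_alpha1, alpha3_mul_alpha1, alpha3_mul_alpha2]
  module

section MatrixNorm

open scoped Matrix.Norms.L2Operator

theorem matNorm_eq_norm {n : ℕ} (A : Matrix (Fin n) (Fin n) ℂ) : matNorm A = ‖A‖ := rfl

theorem norm_betaM : ‖betaM‖ = 1 := by
  have h := norm_sq_eq_norm_of_mul_self_eq_smul_one (z := (1 : ℂ)) isSelfAdjoint_betaM
    (by rw [betaM_mul_self, one_smul])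
  rwa [norm_one, pow_eq_one_iff_of_nonneg (norm_nonneg _) two_ne_zero] at h

theorem norm_alphaDot (x : E3) : ‖alphaDot x‖ = ‖x‖ := by
  have h := norm_sq_eq_norm_of_mul_self_eq_smul_one (isSelfAdjoint_alphaDot x)
    (alphaDot_mul_self x)
  rwa [norm_pow, Complex.norm_real, norm_norm, sq_eq_sq₀ (norm_nonneg _) (norm_nonneg _)] at h

theorem norm_I_div_smul_alphaDot (c : ℂ) (x : E3) :
    ‖(I / (c * (‖x‖ : ℂ) ^ 2)) • alphaDot x‖ = ‖c‖⁻¹ * ‖x‖⁻¹ := by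
  rcases eq_or_ne x 0 with rfl | hx
  · simp
  · have hr : ‖x‖ ≠ 0 := norm_ne_zero_iff.2 hx
    rw [norm_smul, norm_alphaDot, norm_div, norm_I, norm_mul, norm_pow, Complex.norm_real,
      norm_norm]
    field_simp

theorem norm_one_add_betaM_le : ‖(1 : M4) + betaM‖ ≤ 2 := by
  calc ‖(1 : M4) + betaM‖ ≤ ‖(1 : M4)‖ + ‖betaM‖ := norm_add_le _ _
    _ = 2 := by rw [CStarRing.norm_one, norm_betaM, one_add_one_eq_two]

theorem norm_I_div_smul_alphaDot_add_smul_one_add_betaM_le (c m : ℂ) (x : E3) :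
    ‖(I / (c * (‖x‖ : ℂ) ^ 2)) • alphaDot x + m • ((1 : M4) + betaM)‖ ≤
      ‖c‖⁻¹ * ‖x‖⁻¹ + 2 * ‖m‖ := by
  refine (norm_add_le _ _).trans (add_le_add (norm_I_div_smul_alphaDot c x).le ?_)
  rw [norm_smul, mul_comm]
  gcongr
  exact norm_one_add_betaM_le

theorem matNorm_t3ker_le (m c lam : ℝ) {x : E3} (hx : x ≠ 0) :
    matNorm (t3ker m c lam x) ≤
      Real.sqrt ((m * c) ^ 2 - lam ^ 2 / c ^ 2) / (4 * Real.pi) *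
        (|c|⁻¹ * ‖x‖⁻¹ + 2 * |m|) := by
  rw [matNorm_eq_norm, t3ker, norm_smul, Complex.norm_real, Real.norm_eq_abs]
  gcongr
  · exact abs_one_sub_exp_neg_mul_div_mul_le (by positivity) (norm_pos_iff.2 hx)
      (Real.sqrt_nonneg _)
  · simpa only [Complex.norm_real, Real.norm_eq_abs] using
      norm_I_div_smul_alphaDot_add_smul_one_add_betaM_le c m x

end MatrixNorm

/-- **Estimate for `t₃^λ` in Proposition 3.5:** `|t₃^λ(x)| ≤ κ s(λ)(1 + |x|⁻¹)`,
uniformly in `λ ∈ (-mc², mc²)`. -/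
theorem t3_bound (m c : ℝ) (hm : 0 < m) (hc : 0 < c) :
    ∃ κ : ℝ, 0 < κ ∧
      ∀ lam : ℝ, lam ∈ Set.Ioo (-(m * c ^ 2)) (m * c ^ 2) →
        ∀ x : E3, x ≠ 0 →
          matNorm (t3ker m c lam x) ≤
            κ * Real.sqrt ((m * c) ^ 2 - lam ^ 2 / c ^ 2) * (1 + ‖x‖⁻¹) := by
  refine ⟨(c⁻¹ + 2 * m) / (4 * Real.pi), by positivity, fun lam _ x hx => ?_⟩
  set s := Real.sqrt ((m * c) ^ 2 - lam ^ 2 / c ^ 2)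
  calc matNorm (t3ker m c lam x)
      ≤ s / (4 * Real.pi) * (c⁻¹ * ‖x‖⁻¹ + 2 * m) := by
        simpa only [abs_of_pos hm, abs_of_pos hc] using matNorm_t3ker_le m c lam hx
    _ ≤ s / (4 * Real.pi) * ((c⁻¹ + 2 * m) * (1 + ‖x‖⁻¹)) := by
        gcongr
        have cross_terms_nonneg : 0 ≤ c⁻¹ + 2 * m * ‖x‖⁻¹ := by positivity
        linarith
    _ = (c⁻¹ + 2 * m) / (4 * Real.pi) * s * (1 + ‖x‖⁻¹) := by ring
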